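/- arXiv:1508.02549 — 4 statements merged into one kernel-verified Lean document; each statement's English description precedes it below -/
import Mathlib

section
/- Let R be a unital associative (not necessarily commutative) ring, let A be an invertible N×N matrix over R, and let I, J ⊆ {1,…,N} be subsets of the same cardinality M such that the complementary submatrix A_{I^c J^c} is invertible. Then the M×M submatrix (A⁻¹)_{JI} of the inverse matrix is invertible, so the (I,J)-quasideterminant |A|_{IJ} exists, and it is given by the formula |A|_{IJ} = A_{IJ} − A_{IJ^c}·(A_{I^cJ^c})⁻¹·A_{I^cJ}. -/
/-- A product of submatrices, with the summation index split along a predicate. -/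
theorem Matrix.submatrix_mul_add_submatrix_mul_not
    {R l m n l' n' : Type*} [NonUnitalNonAssocSemiring R] [Fintype m]
    (p : m → Prop) [Fintype {x // p x}] [Fintype {x // ¬p x}]
    (A : Matrix l m R) (B : Matrix m n R) (f : l' → l) (g : n' → n) :
    A.submatrix f (fun x : {x // p x} => (x : m)) * B.submatrix (fun x : {x // p x} => (x : m)) g
      + A.submatrix f (fun x : {x // ¬p x} => (x : m))
        * B.submatrix (fun x : {x // ¬p x} => (x : m)) g
      = (A * B).submatrix f g := by
  classical
  ext i j
  simp only [Matrix.add_apply, Matrix.mul_apply, Matrix.submatrix_apply]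
  rw [← Fintype.sum_subtype_add_sum_subtype p]
  congr!

/-- If the first block column of `[a, b; c, d] * [p; r]` is `[1; 0]` and `t` is a left inverse of
`d`, then `p` is a right inverse of the Schur complement of `d`. -/
theorem Matrix.schurComplement_mul_eq_one
    {R m m' n n' : Type*} [Ring R] [Fintype m] [Fintype m'] [Fintype n] [Fintype n']
    [DecidableEq m] [DecidableEq n']
    {a : Matrix m n R} {b : Matrix m n' R} {c : Matrix m' n R} {d : Matrix m' n' R}
    {t : Matrix n' m' R} {p : Matrix n m R} {r : Matrix n' m R}
    (h_one : a * p + b * r = 1) (h_zero : c * p + d * r = 0) (ht : t * d = 1) :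
    (a - b * t * c) * p = 1 := by
  have hr : t * (c * p) = -r := by
    rw [eq_neg_of_add_eq_zero_left h_zero, Matrix.mul_neg, ← Matrix.mul_assoc, ht, Matrix.one_mul]
  rw [Matrix.sub_mul, Matrix.mul_assoc, Matrix.mul_assoc, hr, Matrix.mul_neg, sub_neg_eq_add,
    h_one]

/-- If the first block row of `[p, q] * [a, b; c, d]` is `[1, 0]` and `t` is a right inverse of
`d`, then `p` is a left inverse of the Schur complement of `d`. -/
theorem Matrix.mul_schurComplement_eq_one
    {R m m' n n' : Type*} [Ring R] [Fintype m] [Fintype m'] [Fintype n] [Fintype n']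
    [DecidableEq n] [DecidableEq m']
    {a : Matrix m n R} {b : Matrix m n' R} {c : Matrix m' n R} {d : Matrix m' n' R}
    {t : Matrix n' m' R} {p : Matrix n m R} {q : Matrix n m' R}
    (h_one : p * a + q * c = 1) (h_zero : p * b + q * d = 0) (ht : d * t = 1) :
    p * (a - b * t * c) = 1 := by
  have hq : p * b * t = -q := by
    rw [eq_neg_of_add_eq_zero_left h_zero, Matrix.neg_mul, Matrix.mul_assoc, ht, Matrix.mul_one]
  rw [Matrix.mul_sub, ← Matrix.mul_assoc, ← Matrix.mul_assoc, hq, Matrix.neg_mul, sub_neg_eq_add,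
    h_one]

/-- The submatrix of the identity on rows and columns with disjoint index sets vanishes. -/
theorem Matrix.one_submatrix_eq_zero {R l m n : Type*} [Zero R] [One R] [DecidableEq n]
    {f : l → n} {g : m → n} (h : ∀ i j, f i ≠ g j) :
    (1 : Matrix n n R).submatrix f g = 0 := by
  ext i j
  exact Matrix.one_apply_ne (h i j)

/-- **Existence and formula for the quasideterminant** (Proposition on quasideterminants).

Let `R` be a unital associative (not necessarily commutative) ring, let `A` be an
invertible `N × N` matrix over `R` (with two-sided inverse `B = A⁻¹`), and let
`I, J ⊆ {1,…,N}` be subsets of the same cardinality `M` such that the complementary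
submatrix `A_{IᶜJᶜ}` is invertible (with two-sided inverse `Tc`).  Then the `M × M`
submatrix `(A⁻¹)_{JI}` of the inverse matrix is invertible — so the
`(I,J)`-quasideterminant `|A|_{IJ} := ((A⁻¹)_{JI})⁻¹` exists — and it is given by
`|A|_{IJ} = A_{IJ} - A_{IJᶜ} * (A_{IᶜJᶜ})⁻¹ * A_{IᶜJ}`,
i.e. the displayed Schur complement is a two-sided inverse of `(A⁻¹)_{JI}`. -/
theorem quasideterminant_formula
    {R : Type*} [Ring R] {N : ℕ}
    (A B : Matrix (Fin N) (Fin N) R)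
    (hAB : A * B = 1) (hBA : B * A = 1)
    (I J : Finset (Fin N)) (hcard : I.card = J.card)
    (Tc : Matrix {j // j ∉ J} {i // i ∉ I} R)
    (hTc1 : A.submatrix (fun i : {i // i ∉ I} => (i : Fin N))
              (fun j : {j // j ∉ J} => (j : Fin N)) * Tc = 1)
    (hTc2 : Tc * A.submatrix (fun i : {i // i ∉ I} => (i : Fin N))
              (fun j : {j // j ∉ J} => (j : Fin N)) = 1) :
    B.submatrix (fun j : {j // j ∈ J} => (j : Fin N)) (fun i : {i // i ∈ I} => (i : Fin N)) *
        (A.submatrix (fun i : {i // i ∈ I} => (i : Fin N)) (fun j : {j // j ∈ J} => (j : Fin N))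
          - A.submatrix (fun i : {i // i ∈ I} => (i : Fin N)) (fun j : {j // j ∉ J} => (j : Fin N))
            * Tc
            * A.submatrix (fun i : {i // i ∉ I} => (i : Fin N)) (fun j : {j // j ∈ J} => (j : Fin N)))
      = 1
    ∧ (A.submatrix (fun i : {i // i ∈ I} => (i : Fin N)) (fun j : {j // j ∈ J} => (j : Fin N))
          - A.submatrix (fun i : {i // i ∈ I} => (i : Fin N)) (fun j : {j // j ∉ J} => (j : Fin N))
            * Tc
            * A.submatrix (fun i : {i // i ∉ I} => (i : Fin N)) (fun j : {j // j ∈ J} => (j : Fin N)))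
        * B.submatrix (fun j : {j // j ∈ J} => (j : Fin N)) (fun i : {i // i ∈ I} => (i : Fin N))
      = 1 := by
  constructor
  · refine Matrix.mul_schurComplement_eq_one
      (q := B.submatrix (fun j : {j // j ∈ J} => (j : Fin N))
        (fun i : {i // i ∉ I} => (i : Fin N))) ?_ ?_ hTc1
    · rw [Matrix.submatrix_mul_add_submatrix_mul_not (· ∈ I), hBA]
      exact Matrix.submatrix_one _ Subtype.val_injective
    · rw [Matrix.submatrix_mul_add_submatrix_mul_not (· ∈ I), hBA]
      exact Matrix.one_submatrix_eq_zero fun i j h => j.2 (h ▸ i.2)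
  · refine Matrix.schurComplement_mul_eq_one
      (r := B.submatrix (fun j : {j // j ∉ J} => (j : Fin N))
        (fun i : {i // i ∈ I} => (i : Fin N))) ?_ ?_ hTc2
    · rw [Matrix.submatrix_mul_add_submatrix_mul_not (· ∈ J), hAB]
      exact Matrix.submatrix_one _ Subtype.val_injective
    · rw [Matrix.submatrix_mul_add_submatrix_mul_not (· ∈ J), hAB]
      exact Matrix.one_submatrix_eq_zero fun i j h => i.2 (h ▸ j.2)
end

section
/- Let R be a unital associative (not necessarily commutative) ring, let A be an N×N matrix over R, let I be an N×M matrix and J an M×N matrix over R. Assume that A is invertible, that the M×M matrix J·A⁻¹·I is invertible (so the generalized (I,J)-quasideterminant |A|_{IJ} exists), and that the N×N matrix A + I·J is invertible. Then the M×M matrix J·(A+IJ)⁻¹·I is invertible, i.e. the (I,J)-quasideterminant of A + IJ exists, and it is given by |A+IJ|_{IJ} = |A|_{IJ} + 𝟙_M, where 𝟙_M is the M×M identity matrix; equivalently, (J·(A+IJ)⁻¹·I)⁻¹ = (J·A⁻¹·I)⁻¹ + 𝟙_M. -/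
/-- **Shift of a generalized quasideterminant** (Theorem `|A + IJ|_{IJ} = |A|_{IJ} + 𝟙`).

Let `R` be a unital associative (not necessarily commutative) ring, `A` an invertible
`N × N` matrix over `R` (with two-sided inverse `B`), `I` an `N × M` matrix and `J` an
`M × N` matrix over `R`.  Assume that the `M × M` matrix `J * A⁻¹ * I` is invertible
(with two-sided inverse `K = |A|_{IJ}`, the generalized `(I,J)`-quasideterminant of `A`),
and that `A + I * J` is invertible (with two-sided inverse `C`).  Then
`J * (A + I*J)⁻¹ * I` is invertible, i.e. the `(I,J)`-quasideterminant of `A + I*J`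
exists, and `|A + IJ|_{IJ} = |A|_{IJ} + 𝟙_M`: that is, `K + 1` is a two-sided inverse
of `J * (A + I*J)⁻¹ * I`. -/
theorem quasideterminant_add_IJ
    {R : Type*} [Ring R] {N M : ℕ}
    (A B : Matrix (Fin N) (Fin N) R)
    (hAB : A * B = 1) (hBA : B * A = 1)
    (I : Matrix (Fin N) (Fin M) R) (J : Matrix (Fin M) (Fin N) R)
    (K : Matrix (Fin M) (Fin M) R)
    (hK1 : (J * B * I) * K = 1) (hK2 : K * (J * B * I) = 1)
    (C : Matrix (Fin N) (Fin N) R)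
    (hC1 : (A + I * J) * C = 1) (hC2 : C * (A + I * J) = 1) :
    (J * C * I) * (K + 1) = 1 ∧ (K + 1) * (J * C * I) = 1 := by
  have hBC : C + C * I * J * B = B := by
    calc C + C * I * J * B = C * (A * B) + C * (I * J) * B := by
          rw [hAB, Matrix.mul_one, Matrix.mul_assoc C I J]
      _ = C * (A + I * J) * B := by
          rw [Matrix.mul_add, Matrix.add_mul, Matrix.mul_assoc C A B]
      _ = B := by rw [hC2, Matrix.one_mul]
  have hCB : C + B * I * J * C = B := by
    calc C + B * I * J * C = B * A * C + B * (I * J) * C := by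
          rw [hBA, Matrix.one_mul, Matrix.mul_assoc B I J]
      _ = B * ((A + I * J) * C) := by
          rw [Matrix.add_mul, Matrix.mul_add, Matrix.mul_assoc B A C,
            Matrix.mul_assoc B (I * J) C]
      _ = B := by rw [hC1, Matrix.mul_one]
  have hright : J * C * I + (J * C * I) * (J * B * I) = J * B * I := by
    conv_rhs => rw [← hBC]
    simp only [Matrix.mul_add, Matrix.add_mul, Matrix.mul_assoc]
  have hleft : J * C * I + (J * B * I) * (J * C * I) = J * B * I := by
    conv_rhs => rw [← hCB]
    simp only [Matrix.mul_add, Matrix.add_mul, Matrix.mul_assoc]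
  generalize J * C * I = Y at *
  generalize J * B * I = X at *
  constructor
  · calc Y * (K + 1) = (Y + Y * X) * K := by
          rw [add_mul, mul_assoc, hK1, mul_add]
      _ = 1 := by rw [hright, hK1]
  · calc (K + 1) * Y = K * (Y + X * Y) := by
          rw [mul_add, ← mul_assoc, hK2, add_mul]
      _ = 1 := by rw [hleft, hK2]
end

section
/- Let V be a commutative ring equipped with a derivation d, and let A, B be N×N matrices whose entries are formal Laurent series in z⁻¹ over V (equivalently, formal Laurent series in z⁻¹ with coefficients in the N×N matrices over V). Define the symbol of the composition of the associated matrix pseudodifferential operators by (A∘B)(z) := Σ_{k≥0} (D^k A)(z)·(d^k B)(z), where D^k is the k-th Hasse derivative with respect to z, d acts on B entrywise and coefficientwise, and the product is the matrix product of Laurent series (only finitely many summands contribute to each coefficient, so the sum is well defined). Then Res_z tr((A∘B)(z)) − Res_z tr((B∘A)(z)) lies in the image of the derivation d; that is, the trace of the residue of the composition is symmetric in A and B up to total derivatives. -/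
/-!
We model the ring `V((z⁻¹))` of formal Laurent series in `z⁻¹` over a commutative ring
`V` by Hahn series `HahnSeries ℤ V`, where the Hahn exponent `j` records the coefficient
of `z⁻ʲ` (i.e. the Hahn variable is `X = z⁻¹`).  For `A(z) = Σₙ aₙ zⁿ` we have
`A.coeff j = a₋ⱼ`, multiplication of Hahn series is multiplication of Laurent series,
and the residue `Res_z A = a₋₁` is `A.coeff 1`.

A derivation `d : V → V` (an additive map satisfying the Leibniz rule) is extended to
`V((z⁻¹))` coefficientwise, via `HahnSeries.map`, and to matrices of Laurent series
entrywise, via `Matrix.map`; `D^k` denotes the `k`-th Hasse derivative with respect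
to `z`, applied entrywise to a matrix of Laurent series.

The symbol of the composition of the matrix pseudodifferential operators associated to
`N × N` matrices `A`, `B` of Laurent series is `(A∘B)(z) = Σ_{k≥0} (D^k A)(z)·(dᵏB)(z)`;
only finitely many summands contribute to each coefficient, and in particular
`Res_z tr((A∘B)(z)) = ∑ᶠ k, Res_z tr((D^k A)(z)·(dᵏB)(z))`, the sum over `k` of the
termwise trace-residues being a finitely supported sum (`finsum`).
-/

/-- The `k`-th Hasse derivative with respect to `z`:
`D^k A := Σₙ binom(n,k) · aₙ · z^(n−k)`, where `binom(n,k)` for `n : ℤ`, `k : ℕ` is the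
generalized binomial coefficient (`Ring.choose n k` for the binomial ring `ℤ`).
In the `z⁻¹`-coefficient picture, `(D^k A).coeff j = binom(k−j, k) • A.coeff (j−k)`. -/
noncomputable def hasseDeriv {V : Type*} [CommRing V] (k : ℕ) (f : HahnSeries ℤ V) :
    HahnSeries ℤ V where
  coeff j := Ring.choose ((k : ℤ) - j) k • f.coeff (j - k)
  isPWO_support' := by
    refine (f.isPWO_support'.add (Set.finite_singleton (k : ℤ)).isPWO).mono ?_
    intro j hj
    have hf : f.coeff (j - (k : ℤ)) ≠ 0 := by
      intro h
      apply hj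
      simp [h]
    exact ⟨j - (k : ℤ), hf, (k : ℤ), rfl, by ring⟩

/-- The coefficientwise extension of an additive map to Laurent series satisfies the Leibniz rule
as soon as the map does. -/
theorem HahnSeries.map_mul_of_leibniz {V : Type*} [CommRing V] (d : V →+ V)
    (hd : ∀ a b : V, d (a * b) = d a * b + a * d b) (f g : HahnSeries ℤ V) :
    (f * g).map d = f.map d * g + f * g.map d := by
  have hsupp : ∀ h : HahnSeries ℤ V, (h.map d).support ⊆ h.support := fun h n hn h0 =>
    hn (by simp [h0])
  ext n
  rw [HahnSeries.coeff_add, HahnSeries.coeff_mul_left' f.isPWO_support (hsupp f),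
    HahnSeries.coeff_mul_right' g.isPWO_support (hsupp g), HahnSeries.map_coeff,
    HahnSeries.coeff_mul, map_sum, ← Finset.sum_add_distrib]
  simp only [hd, HahnSeries.map_coeff]

/-- The coefficients of a product of Laurent series as a sum over all integers. -/
theorem HahnSeries.coeff_mul_eq_finsum {V : Type*} [CommRing V] (f g : HahnSeries ℤ V) (n : ℤ) :
    (f * g).coeff n = ∑ᶠ i : ℤ, f.coeff i * g.coeff (n - i) := by
  classical
  rw [HahnSeries.coeff_mul, finsum_eq_sum_of_support_subset (s :=
    (Finset.antidiagonal f.isPWO_support g.isPWO_support n).image Prod.fst)]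
  · rw [Finset.sum_image]
    · refine Finset.sum_congr rfl fun p hp => ?_
      obtain ⟨-, -, h⟩ := Finset.mem_antidiagonal.1 hp
      rw [← h, add_sub_cancel_left]
    · intro p hp q hq h
      obtain ⟨-, -, hp⟩ := Finset.mem_antidiagonal.1 hp
      obtain ⟨-, -, hq⟩ := Finset.mem_antidiagonal.1 hq
      exact Prod.ext h (by omega)
  · intro i hi
    simp only [Finset.coe_image, Set.mem_image, Finset.mem_coe, Finset.mem_antidiagonal]
    exact ⟨(i, n - i), ⟨left_ne_zero_of_mul hi, right_ne_zero_of_mul hi, add_sub_cancel i n⟩, rfl⟩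

theorem HahnSeries.hasFiniteSupport_coeff_mul_coeff_sub {V : Type*} [CommRing V]
    (f g : HahnSeries ℤ V) (n : ℤ) :
    Function.HasFiniteSupport fun i : ℤ => f.coeff i * g.coeff (n - i) := by
  refine (Set.finite_Icc f.order (n - g.order)).subset fun i hi => ?_
  have hf := HahnSeries.order_le_of_coeff_ne_zero (left_ne_zero_of_mul hi)
  have hg := HahnSeries.order_le_of_coeff_ne_zero (right_ne_zero_of_mul hi)
  exact ⟨hf, by omega⟩

theorem HahnSeries.coeff_iterate_map {V : Type*} [CommRing V] (d : V →+ V) (k : ℕ)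
    (g : HahnSeries ℤ V) (n : ℤ) :
    ((fun h : HahnSeries ℤ V => h.map d)^[k] g).coeff n = d^[k] (g.coeff n) := by
  induction k generalizing g with
  | zero => rfl
  | succ k ih => simp only [Function.iterate_succ_apply, ih, HahnSeries.map_coeff]

/-- Integration by parts: the residue pairing makes the `k`-th Hasse derivative adjoint to
`(-1)ᵏ` times itself. -/
theorem residue_hasseDeriv_mul {V : Type*} [CommRing V] (k : ℕ) (f g : HahnSeries ℤ V) :
    (hasseDeriv k f * g).coeff 1 = (-1) ^ k * (f * hasseDeriv k g).coeff 1 := by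
  rw [HahnSeries.coeff_mul_eq_finsum, HahnSeries.coeff_mul_eq_finsum,
    ← smul_eq_mul ((-1 : V) ^ k),
    smul_finsum' _ (HahnSeries.hasFiniteSupport_coeff_mul_coeff_sub _ _ _),
    ← finsum_comp_equiv (Equiv.addRight (k : ℤ))]
  refine finsum_congr fun j => ?_
  have hc : Ring.choose ((k : ℤ) - (j + k)) k = (-1) ^ k * Ring.choose ((k : ℤ) - (1 - j)) k := by
    rw [show (k : ℤ) - (j + k) = -j by ring, Ring.choose_neg,
      show (k : ℤ) - (1 - j) = j + k - 1 by ring, Int.negOnePow_def]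
    simp [Units.smul_def]
  simp only [hasseDeriv, Equiv.coe_addRight, hc, add_sub_cancel_right, zsmul_eq_mul, smul_eq_mul,
    show (1 : ℤ) - (j + k) = 1 - j - k by ring]
  push_cast
  ring

theorem residue_hasseDeriv_mul_iterate_eq_zero {V : Type*} [CommRing V] (d : V →+ V) {k : ℕ}
    {f g : HahnSeries ℤ V} (hk : 1 - f.order - g.order < k) :
    (hasseDeriv k f * (fun h : HahnSeries ℤ V => h.map d)^[k] g).coeff 1 = 0 := by
  rw [HahnSeries.coeff_mul_eq_finsum]
  refine finsum_eq_zero_of_forall_eq_zero fun i => ?_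
  rw [HahnSeries.coeff_iterate_map]
  by_cases hi : i - k < f.order
  · simp [hasseDeriv, HahnSeries.coeff_eq_zero_of_lt_order hi]
  · rw [HahnSeries.coeff_eq_zero_of_lt_order (show 1 - i < g.order by omega),
      iterate_map_zero, mul_zero]

theorem hasFiniteSupport_residue_hasseDeriv_mul_iterate {V : Type*} [CommRing V] (d : V →+ V)
    (f g : HahnSeries ℤ V) :
    Function.HasFiniteSupport fun k : ℕ =>
      (hasseDeriv k f * (fun h : HahnSeries ℤ V => h.map d)^[k] g).coeff 1 := by
  refine (Set.finite_Iic (1 - f.order - g.order).toNat).subset fun k hk => ?_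
  by_contra h
  exact hk (residue_hasseDeriv_mul_iterate_eq_zero d (by simp only [Set.mem_Iic] at h; omega))

/-- Repeated integration by parts for a derivation `δ`: `a δᵏ(b) ≡ (-1)ᵏ δᵏ(a) b` modulo the
image of `δ`. -/
theorem mul_iterate_sub_mem_range {R : Type*} [CommRing R] (δ : R →+ R)
    (hδ : ∀ a b : R, δ (a * b) = δ a * b + a * δ b) (k : ℕ) (a b : R) :
    a * δ^[k] b - (-1) ^ k * (b * δ^[k] a) ∈ δ.range := by
  induction k generalizing a with
  | zero => exact ⟨0, by simp [mul_comm]⟩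
  | succ k ih =>
    obtain ⟨c, hc⟩ := ih (δ a)
    refine ⟨a * δ^[k] b - c, ?_⟩
    rw [map_sub, hc, hδ, Function.iterate_succ_apply', Function.iterate_succ_apply]
    ring

theorem hasseDeriv_map {V : Type*} [CommRing V] (d : V →+ V) (k : ℕ) (f : HahnSeries ℤ V) :
    hasseDeriv k (f.map d) = (hasseDeriv k f).map d := by
  ext n
  simp only [hasseDeriv, HahnSeries.map_coeff, map_zsmul]

theorem residue_hasseDeriv_mul_iterate_sub_mem_range {V : Type*} [CommRing V] (d : V →+ V)
    (hd : ∀ a b : V, d (a * b) = d a * b + a * d b) (k : ℕ) (f g : HahnSeries ℤ V) :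
    (hasseDeriv k f * (fun h : HahnSeries ℤ V => h.map d)^[k] g).coeff 1 -
      (hasseDeriv k g * (fun h : HahnSeries ℤ V => h.map d)^[k] f).coeff 1 ∈ d.range := by
  let δ : HahnSeries ℤ V →+ HahnSeries ℤ V :=
    { toFun h := h.map d
      map_zero' := by ext; simp
      map_add' x y := by ext; simp }
  obtain ⟨w, hw⟩ := mul_iterate_sub_mem_range δ (HahnSeries.map_mul_of_leibniz d hd) k
    (hasseDeriv k f) g
  have hcomm : hasseDeriv k (δ^[k] f) = δ^[k] (hasseDeriv k f) :=
    Function.Commute.iterate_right (fun h => hasseDeriv_map d k h) k f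
  have hsign : ((-1) ^ k * (g * δ^[k] (hasseDeriv k f))).coeff 1 =
      (-1) ^ k * (g * δ^[k] (hasseDeriv k f)).coeff 1 := by
    rcases k.even_or_odd with hk | hk <;> simp [hk.neg_one_pow]
  refine ⟨w.coeff 1, ?_⟩
  have := congrArg (fun h : HahnSeries ℤ V => h.coeff 1) hw
  simp only [HahnSeries.coeff_sub, hsign] at this
  rw [residue_hasseDeriv_mul k g]
  change _ = _ - (-1) ^ k * (g * hasseDeriv k (δ^[k] f)).coeff 1
  rw [hcomm]
  exact this

theorem residue_trace_mul_iterate {V : Type*} [CommRing V] {N : ℕ} (d : V →+ V)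
    (A B : Matrix (Fin N) (Fin N) (HahnSeries ℤ V)) (k : ℕ) :
    ((A.map (hasseDeriv k) *
      (fun M : Matrix (Fin N) (Fin N) (HahnSeries ℤ V) =>
        M.map fun g => g.map d)^[k] B).trace).coeff 1 =
      ∑ p : Fin N × Fin N, (hasseDeriv k (A p.1 p.2) *
        (fun h : HahnSeries ℤ V => h.map d)^[k] (B p.2 p.1)).coeff 1 := by
  have hentry : ∀ (M : Matrix (Fin N) (Fin N) (HahnSeries ℤ V)) (i j : Fin N),
      (fun M : Matrix (Fin N) (Fin N) (HahnSeries ℤ V) => M.map fun g => g.map d)^[k] M i j =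
        (fun h : HahnSeries ℤ V => h.map d)^[k] (M i j) := by
    intro M i j
    induction k generalizing M with
    | zero => rfl
    | succ k ih => simp only [Function.iterate_succ_apply, ih, Matrix.map_apply]
  simp only [Matrix.trace, Matrix.diag_apply, Matrix.mul_apply, Matrix.map_apply,
    HahnSeries.coeff_sum, hentry, Fintype.sum_prod_type]

/-- **The trace-residue of the composition is symmetric up to total derivatives:**
if `d` is a derivation of the commutative ring `V` and `A, B` are `N × N` matrices of
Laurent series in `z⁻¹` over `V`, then
`Res_z tr((A∘B)(z)) − Res_z tr((B∘A)(z))` lies in the image of `d`, where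
`(A∘B)(z) = Σ_{k≥0} (D^k A)(z)·(dᵏ B)(z)` and the trace-residue of the composition is
computed termwise as the (finitely supported) sum `∑ᶠ k, Res_z tr((D^k A)(z)·(dᵏ B)(z))`. -/
theorem residue_trace_comp_symm_mod_total_derivatives
    {V : Type*} [CommRing V] {N : ℕ}
    (d : V →+ V) (hd : ∀ a b : V, d (a * b) = d a * b + a * d b)
    (A B : Matrix (Fin N) (Fin N) (HahnSeries ℤ V)) :
    ∃ v : V,
      (∑ᶠ k : ℕ,
        ((A.map (hasseDeriv k) *
          (fun M : Matrix (Fin N) (Fin N) (HahnSeries ℤ V) =>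
            M.map fun g => g.map d)^[k] B).trace).coeff 1)
      - (∑ᶠ k : ℕ,
        ((B.map (hasseDeriv k) *
          (fun M : Matrix (Fin N) (Fin N) (HahnSeries ℤ V) =>
            M.map fun g => g.map d)^[k] A).trace).coeff 1)
      = d v := by
  suffices h : _ ∈ d.range from h.imp fun _ h => h.symm
  simp only [residue_trace_mul_iterate]
  rw [finsum_sum_comm _ _ fun _ _ => hasFiniteSupport_residue_hasseDeriv_mul_iterate d _ _,
    finsum_sum_comm _ _ fun _ _ => hasFiniteSupport_residue_hasseDeriv_mul_iterate d _ _,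
    ← Equiv.sum_comp (Equiv.prodComm (Fin N) (Fin N)) fun p => ∑ᶠ k : ℕ,
      (hasseDeriv k (B p.1 p.2) * (fun h : HahnSeries ℤ V => h.map d)^[k] (A p.2 p.1)).coeff 1,
    ← Finset.sum_sub_distrib]
  refine sum_mem fun p _ => ?_
  rw [← finsum_sub_distrib (hasFiniteSupport_residue_hasseDeriv_mul_iterate d _ _)
    (hasFiniteSupport_residue_hasseDeriv_mul_iterate d _ _)]
  exact finsum_induction (· ∈ d.range) (zero_mem _) (fun _ _ => add_mem)
    fun k => residue_hasseDeriv_mul_iterate_sub_mem_range d hd k _ _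
end

section
/- For any field F, the diagonal matrix diag(X⁻³, X⁻¹) ∈ Mat₂(F((X))) admits no square root: there is no 2×2 matrix Δ with entries in the field F((X)) of formal Laurent series such that Δ² = diag(X⁻³, X⁻¹). -/
/-- In a field, a `2 × 2` diagonal matrix with distinct diagonal entries that has a square root
has a square as its second entry. -/
theorem isSquare_of_sq_eq_diag {K : Type*} [Field K] {Δ : Matrix (Fin 2) (Fin 2) K} {s t : K}
    (hst : s ≠ t) (h : Δ ^ 2 = !![s, 0; 0, t]) : IsSquare t := by
  have entry (i j : Fin 2) := congrFun (congrFun h i) j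
  simp only [sq, Matrix.mul_apply, Fin.sum_univ_two] at entry
  have h00 := entry 0 0
  have h01 := entry 0 1
  have h11 := entry 1 1
  simp at h00 h01 h11
  have htrace : Δ 0 0 + Δ 1 1 ≠ 0 := fun h0 ↦ hst <| by
    linear_combination (Δ 0 0 - Δ 1 1) * h0 - h00 + h11
  have hb : Δ 0 1 = 0 :=
    (mul_eq_zero.mp (by linear_combination h01 : Δ 0 1 * (Δ 0 0 + Δ 1 1) = 0)).resolve_right htrace
  exact ⟨Δ 1 1, by rw [← h11, hb]; ring⟩

/-- The inverse of the variable is not a square in the field of formal Laurent series. -/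
theorem not_isSquare_inv_single_one (F : Type*) [Field F] :
    ¬ IsSquare (HahnSeries.single (1 : ℤ) (1 : F))⁻¹ := by
  rintro ⟨d, hd⟩
  rw [HahnSeries.inv_single, inv_one] at hd
  have hd0 : d ≠ 0 := by
    rintro rfl
    simp at hd
  have horder := congrArg HahnSeries.order hd
  rw [HahnSeries.order_mul hd0 hd0, HahnSeries.order_single one_ne_zero] at horder
  lia

/-- **`diag(X⁻³, X⁻¹)` has no square root over `F((X))`:** for any field `F` there is
no `2 × 2` matrix `Δ` with entries in the field `F((X))` of formal Laurent series
(`LaurentSeries F`) such that `Δ² = diag(X⁻³, X⁻¹)`.  (Via the identification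
`∂ = X⁻¹` this models the fact that the matrix `diag(∂³, ∂)`, whose Dieudonné
determinant has degree `4`, has no square root with constant, hence commuting,
coefficients.) -/
theorem no_square_root_diag_Xinv3_Xinv1 (F : Type*) [Field F] :
    ¬ ∃ Δ : Matrix (Fin 2) (Fin 2) (LaurentSeries F),
      Δ ^ 2 = !![(HahnSeries.single (1 : ℤ) (1 : F))⁻¹ ^ 3, 0;
                 0, (HahnSeries.single (1 : ℤ) (1 : F))⁻¹] := by
  rintro ⟨Δ, h⟩
  refine not_isSquare_inv_single_one F (isSquare_of_sq_eq_diag (fun heq ↦ ?_) h)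
  rw [HahnSeries.inv_single, inv_one, HahnSeries.single_pow, one_pow] at heq
  have horder := congrArg HahnSeries.order heq
  rw [HahnSeries.order_single one_ne_zero, HahnSeries.order_single one_ne_zero] at horder
  simp at horder
end
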